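/- Let f : ℝ → 𝓢'(ℝⁿ) be continuous for the weak* topology and bounded in the sense that sup_{t∈ℝ} |⟨f(t), φ⟩| < ∞ for every φ ∈ 𝓢(ℝⁿ). Then for every ψ ∈ 𝓢(ℝⁿ×ℝ) the function t ↦ ⟨f(t), ψ(·,t)⟩ is continuous and integrable on ℝ, the functional Λ_f : ψ ↦ ∫_ℝ ⟨f(t), ψ(·,t)⟩ dt is a tempered distribution on ℝⁿ×ℝ ≅ ℝ^{n+1} (in particular there exist c ≥ 0 and M ∈ ℕ with |⟨Λ_f, ψ⟩| ≤ c·p_{M+2}(ψ) for all ψ), and the linear map f ↦ Λ_f is injective on such maps f. -/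

import Mathlib

open MeasureTheory Filter Topology

noncomputable section

/-- The Schwartz seminorm `p_M`, controlling all derivatives of order `≤ M`
with polynomial weights of order `≤ M`. -/
def pM {E : Type*} [NormedAddCommGroup E] [NormedSpace ℝ E]
    (M : ℕ) (φ : SchwartzMap E ℝ) : ℝ :=
  ((Finset.range (M+1) ×ˢ Finset.range (M+1)).sup
    fun kn => SchwartzMap.seminorm ℝ kn.1 kn.2) φ

namespace SchwartzMap

open scoped ContDiff SchwartzMap Uniformity

section Completeness

variable {E F : Type*} [NormedAddCommGroup E] [NormedSpace ℝ E]
  [NormedAddCommGroup F] [NormedSpace ℝ F]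

theorem iteratedFDeriv_sub_apply (φ ψ : 𝓢(E, F)) (m : ℕ) (x : E) :
    iteratedFDeriv ℝ m (φ - ψ : 𝓢(E, F)) x = iteratedFDeriv ℝ m φ x - iteratedFDeriv ℝ m ψ x :=
  _root_.iteratedFDeriv_sub_apply ((φ.smooth m).contDiffAt) ((ψ.smooth m).contDiffAt)

theorem _root_.CauchySeq.exists_schwartz_seminorm_sub_lt {u : ℕ → 𝓢(E, F)} (hu : CauchySeq u)
    (k m : ℕ) {ε : ℝ} (hε : 0 < ε) :
    ∃ N, ∀ i ≥ N, ∀ j ≥ N, SchwartzMap.seminorm ℝ k m (u i - u j) < ε := by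
  have hcont : Continuous (SchwartzMap.seminorm ℝ k m : 𝓢(E, F) → ℝ) :=
    (schwartz_withSeminorms ℝ E F).continuous_seminorm (k, m)
  have hdiff := cauchySeq_iff_tendsto.1 hu
  rw [uniformity_eq_comap_nhds_zero, tendsto_comap_iff] at hdiff
  have hsem := (hcont.tendsto 0).comp hdiff
  rw [map_zero] at hsem
  obtain ⟨⟨a, b⟩, hab⟩ := eventually_atTop.1 (hsem.eventually (gt_mem_nhds hε))
  refine ⟨max a b, fun i hi j hj => ?_⟩
  exact hab (j, i) ⟨(le_max_left a b).trans hj, (le_max_right a b).trans hi⟩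

/-- The space of Schwartz functions with values in a complete space is complete. -/
instance instCompleteSpace [CompleteSpace F] : CompleteSpace 𝓢(E, F) := by
  have : (𝓤 𝓢(E, F)).IsCountablyGenerated := IsUniformAddGroup.uniformity_countably_generated
  refine UniformSpace.complete_of_cauchySeq_tendsto fun u hu => ?_
  have hunif (m : ℕ) :
      UniformCauchySeqOn (fun i x => iteratedFDeriv ℝ m (u i) x) atTop Set.univ := by
    rw [Metric.uniformCauchySeqOn_iff]
    intro ε hε
    obtain ⟨N, hN⟩ := hu.exists_schwartz_seminorm_sub_lt 0 m hε
    refine ⟨N, fun i hi j hj x _ => ?_⟩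
    rw [dist_eq_norm, ← iteratedFDeriv_sub_apply]
    exact (norm_iteratedFDeriv_le_seminorm ℝ _ m x).trans_lt (hN i hi j hj)
  choose G hG using fun (m : ℕ) (x : E) =>
    cauchySeq_tendsto_of_complete ((hunif m).cauchySeq (Set.mem_univ x))
  have hGunif (m : ℕ) : TendstoUniformly (fun i x => iteratedFDeriv ℝ m (u i) x) (G m) atTop :=
    tendstoUniformlyOn_univ.1 ((hunif m).tendstoUniformlyOn_of_tendsto fun x _ => hG m x)
  have htaylor : HasFTaylorSeriesUpTo ∞ (fun x => (G 0 x).curry0) (fun x m => G m x) := by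
    refine ⟨fun x => rfl, fun m _ x => ?_, fun m _ => ?_⟩
    · let L := (continuousMultilinearCurryLeftEquiv ℝ (fun _ : Fin (m + 1) => E) F)
      refine hasFDerivAt_of_tendstoUniformly (l := atTop)
        (f := fun i x => iteratedFDeriv ℝ m (u i) x)
        (f' := fun i x => (iteratedFDeriv ℝ (m + 1) (u i) x).curryLeft)
        (g' := fun x => (G (m + 1) x).curryLeft) ?_ ?_ (hG m) x
      · exact L.isometry.uniformContinuous.comp_tendstoUniformly (hGunif (m + 1))
      · intro i y
        exact ((u i).smooth ⊤).ftaylorSeries.fderiv m (mod_cast WithTop.coe_lt_top m) y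
    · exact (hGunif m).continuous (Frequently.of_forall fun i =>
        ((u i).smooth m).continuous_iteratedFDeriv le_rfl)
  have hderiv (m : ℕ) (x : E) : iteratedFDeriv ℝ m (fun x => (G 0 x).curry0) x = G m x :=
    (htaylor.eq_iteratedFDeriv (mod_cast le_top) x).symm
  have hlim (k m : ℕ) {ε : ℝ} (hε : 0 < ε) : ∃ N, ∀ i ≥ N, ∀ x,
      ‖x‖ ^ k * ‖iteratedFDeriv ℝ m (u i) x - G m x‖ ≤ ε := by
    obtain ⟨N, hN⟩ := hu.exists_schwartz_seminorm_sub_lt k m hε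
    refine ⟨N, fun i hi x => ?_⟩
    refine le_of_tendsto (((hG m x).const_sub _).norm.const_mul _)
      (eventually_atTop.2 ⟨N, fun j hj => ?_⟩)
    rw [← iteratedFDeriv_sub_apply]
    exact (le_seminorm ℝ k m _ x).trans (hN i hi j hj).le
  let φ : 𝓢(E, F) :=
    { toFun := fun x => (G 0 x).curry0
      smooth' := htaylor.contDiff
      decay' := fun k m => by
        obtain ⟨N, hN⟩ := hlim k m one_pos
        refine ⟨SchwartzMap.seminorm ℝ k m (u N) + 1, fun x => ?_⟩
        rw [hderiv]
        have h1 := le_seminorm ℝ k m (u N) x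
        have h2 := hN N le_rfl x
        have h3 : ‖G m x‖ ≤ ‖iteratedFDeriv ℝ m (u N) x‖ + ‖iteratedFDeriv ℝ m (u N) x - G m x‖ :=
          norm_le_norm_add_norm_sub _ _
        calc _ ≤ ‖x‖ ^ k * (‖iteratedFDeriv ℝ m (u N) x‖
              + ‖iteratedFDeriv ℝ m (u N) x - G m x‖) := by gcongr
          _ ≤ _ := by rw [mul_add]; exact add_le_add h1 h2 }
  refine ⟨φ, ((schwartz_withSeminorms ℝ E F).tendsto_nhds_atTop u φ).2 fun ⟨k, m⟩ ε hε => ?_⟩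
  obtain ⟨N, hN⟩ := hlim k m (half_pos hε)
  refine ⟨N, fun i hi => ?_⟩
  refine (seminorm_le_bound ℝ k m _ (half_pos hε).le fun x => ?_).trans_lt (half_lt_self hε)
  rw [iteratedFDeriv_sub_apply, show iteratedFDeriv ℝ m φ x = G m x from hderiv m x]
  exact hN i hi x

instance instBarrelledSpace [CompleteSpace F] : BarrelledSpace ℝ 𝓢(E, F) := by
  have : (𝓤 𝓢(E, F)).IsCountablyGenerated := IsUniformAddGroup.uniformity_countably_generated
  infer_instance

end Completeness

section WeightedSeminorm

variable {E : Type*} [NormedAddCommGroup E] [NormedSpace ℝ E]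

theorem pM_nonneg (M : ℕ) (φ : 𝓢(E, ℝ)) : 0 ≤ pM M φ := apply_nonneg _ _

theorem seminorm_le_pM {M k m : ℕ} (hk : k ≤ M) (hm : m ≤ M) (φ : 𝓢(E, ℝ)) :
    SchwartzMap.seminorm ℝ k m φ ≤ pM M φ :=
  Finset.le_sup (f := fun kn : ℕ × ℕ => SchwartzMap.seminorm ℝ kn.1 kn.2)
    (b := (k, m)) (by simp; omega) φ

theorem pM_le {M : ℕ} {φ : 𝓢(E, ℝ)} {a : ℝ} (ha : 0 ≤ a)
    (h : ∀ k ≤ M, ∀ m ≤ M, SchwartzMap.seminorm ℝ k m φ ≤ a) : pM M φ ≤ a := by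
  refine Seminorm.finset_sup_apply_le ha fun km hkm => ?_
  simp only [Finset.mem_product, Finset.mem_range] at hkm
  exact h _ (by omega) _ (by omega)

/-- **Uniform boundedness principle** for tempered distributions. -/
theorem exists_forall_abs_le_pM {ι : Type*} {f : ι → 𝓢(E, ℝ) →L[ℝ] ℝ}
    (hf : ∀ φ, ∃ C : ℝ, ∀ i, |f i φ| ≤ C) :
    ∃ (C : ℝ) (M : ℕ), 0 ≤ C ∧ ∀ i φ, |f i φ| ≤ C * pM M φ := by
  have hq := norm_withSeminorms ℝ ℝ
  have hequi := hq.banach_steinhaus (𝓕 := f) fun _ φ => by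
    obtain ⟨C, hC⟩ := hf φ
    exact ⟨C, by rintro _ ⟨i, rfl⟩; exact hC i⟩
  obtain ⟨hbdd, hcont⟩ :=
    (hq.uniformEquicontinuous_iff_bddAbove_and_continuous_iSup
      (fun i => (f i).toLinearMap)).1 hequi 0
  rw [← Seminorm.coe_iSup_eq hbdd] at hcont
  obtain ⟨s, C, -, hC⟩ := Seminorm.bound_of_continuous (schwartz_withSeminorms ℝ E ℝ) _ hcont
  refine ⟨C, s.sup fun km => max km.1 km.2, C.2, fun i φ => ?_⟩
  calc |f i φ| ≤ (⨆ i, (normSeminorm ℝ ℝ).comp (f i).toLinearMap) φ :=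
        le_ciSup hbdd i φ
    _ ≤ C * (s.sup (schwartzSeminormFamily ℝ E ℝ)) φ := hC φ
    _ ≤ _ := by
      refine mul_le_mul_of_nonneg_left ?_ C.2
      refine Seminorm.finset_sup_apply_le (pM_nonneg _ _) fun km hkm => ?_
      have := Finset.le_sup (f := fun km : ℕ × ℕ => max km.1 km.2) hkm
      exact seminorm_le_pM ((le_max_left _ _).trans this) ((le_max_right _ _).trans this) φ

theorem iteratedFDeriv_of_eq_slice {ψ : 𝓢(E × ℝ, ℝ)} {t : ℝ} {φ : 𝓢(E, ℝ)}
    (hφ : ∀ x, φ x = ψ (x, t)) (m : ℕ) (x : E) :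
    iteratedFDeriv ℝ m φ x = (iteratedFDeriv ℝ m ψ (x, t)).compContinuousLinearMap
      fun _ => ContinuousLinearMap.inl ℝ E ℝ := by
  have hcomp : (φ : E → ℝ) = (fun z => ψ (z + (0, t))) ∘ ContinuousLinearMap.inl ℝ E ℝ := by
    ext y
    simp [hφ]
  have hsmooth : ContDiff ℝ m fun z => ψ (z + (0, t)) :=
    (ψ.smooth m).comp (contDiff_id.add contDiff_const)
  rw [hcomp, ContinuousLinearMap.iteratedFDeriv_comp_right _ hsmooth x le_rfl,
    iteratedFDeriv_comp_add_right]
  simp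

theorem _root_.ContinuousMultilinearMap.norm_compContinuousLinearMap_inl_le {m : ℕ}
    (A : ContinuousMultilinearMap ℝ (fun _ : Fin m => E × ℝ) ℝ) :
    ‖A.compContinuousLinearMap fun _ => ContinuousLinearMap.inl ℝ E ℝ‖ ≤ ‖A‖ := by
  refine (A.norm_compContinuousLinearMap_le _).trans
    (mul_le_of_le_one_right (norm_nonneg _) ?_)
  exact Finset.prod_le_one (fun _ _ => norm_nonneg _)
    fun _ _ => ContinuousLinearMap.norm_inl_le_one ℝ E ℝ

theorem one_add_sq_mul_seminorm_slice_le {ψ : 𝓢(E × ℝ, ℝ)} {t : ℝ} {φ : 𝓢(E, ℝ)}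
    (hφ : ∀ x, φ x = ψ (x, t)) (k m : ℕ) :
    (1 + t ^ 2) * SchwartzMap.seminorm ℝ k m φ ≤
      SchwartzMap.seminorm ℝ k m ψ + SchwartzMap.seminorm ℝ (k + 2) m ψ := by
  have hpos : 0 < 1 + t ^ 2 := by positivity
  rw [← le_div_iff₀' hpos]
  refine seminorm_le_bound ℝ k m φ (by positivity) fun x => ?_
  rw [le_div_iff₀' hpos, iteratedFDeriv_of_eq_slice hφ]
  have hx : ‖x‖ ≤ ‖(x, t)‖ := norm_fst_le (x, t)
  have ht : t ^ 2 ≤ ‖(x, t)‖ ^ 2 := by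
    rw [← sq_abs]
    exact pow_le_pow_left₀ (abs_nonneg t) (norm_snd_le (x, t)) 2
  calc _ ≤ (1 + ‖(x, t)‖ ^ 2) * (‖(x, t)‖ ^ k * ‖iteratedFDeriv ℝ m ψ (x, t)‖) := by
        gcongr
        exact ContinuousMultilinearMap.norm_compContinuousLinearMap_inl_le _
    _ = ‖(x, t)‖ ^ k * ‖iteratedFDeriv ℝ m ψ (x, t)‖
        + ‖(x, t)‖ ^ (k + 2) * ‖iteratedFDeriv ℝ m ψ (x, t)‖ := by ring
    _ ≤ _ := add_le_add (le_seminorm ℝ _ _ _ _) (le_seminorm ℝ _ _ _ _)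

theorem pM_slice_le {ψ : 𝓢(E × ℝ, ℝ)} {t : ℝ} {φ : 𝓢(E, ℝ)}
    (hφ : ∀ x, φ x = ψ (x, t)) (M : ℕ) :
    pM M φ ≤ 2 * pM (M + 2) ψ * (1 + t ^ 2)⁻¹ := by
  have hψ := pM_nonneg (M + 2) ψ
  refine pM_le (by positivity) fun k hk m hm => ?_
  rw [← div_eq_mul_inv, le_div_iff₀' (by positivity)]
  have h1 : SchwartzMap.seminorm ℝ k m ψ ≤ pM (M + 2) ψ := seminorm_le_pM (by omega) (by omega) ψ
  have h2 : SchwartzMap.seminorm ℝ (k + 2) m ψ ≤ pM (M + 2) ψ :=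
    seminorm_le_pM (by omega) (by omega) ψ
  linarith [one_add_sq_mul_seminorm_slice_le hφ k m]

theorem seminorm_slice_sub_le {ψ : 𝓢(E × ℝ, ℝ)} {s t : ℝ} {φ₁ φ₂ : 𝓢(E, ℝ)}
    (hφ₁ : ∀ x, φ₁ x = ψ (x, t)) (hφ₂ : ∀ x, φ₂ x = ψ (x, s)) (k m : ℕ) :
    SchwartzMap.seminorm ℝ k m (φ₁ - φ₂) ≤ SchwartzMap.seminorm ℝ k (m + 1) ψ * |t - s| := by
  refine seminorm_le_bound ℝ k m _ (by positivity) fun x => ?_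
  have hdiff : Differentiable ℝ (iteratedFDeriv ℝ m ψ) :=
    (ψ.smooth (m + 1 : ℕ)).differentiable_iteratedFDeriv (by exact_mod_cast m.lt_succ_self)
  have hderiv (r : ℝ) : HasDerivAt
      (fun r => ‖x‖ ^ k • iteratedFDeriv ℝ m ψ (x, r))
      (‖x‖ ^ k • fderiv ℝ (iteratedFDeriv ℝ m ψ) (x, r) (0, 1)) r := by
    have hpath : HasDerivAt (fun r : ℝ => (x, r)) ((0 : E), (1 : ℝ)) r :=
      (hasDerivAt_const r x).prodMk (hasDerivAt_id r)
    exact ((hdiff (x, r)).hasFDerivAt.comp_hasDerivAt r hpath).const_smul (‖x‖ ^ k)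
  have hbound (r : ℝ) : ‖‖x‖ ^ k • fderiv ℝ (iteratedFDeriv ℝ m ψ) (x, r) (0, 1)‖ ≤
      SchwartzMap.seminorm ℝ k (m + 1) ψ := by
    have hone : ‖((0 : E), (1 : ℝ))‖ ≤ 1 := by simp [Prod.norm_def]
    rw [norm_smul, norm_pow, norm_norm]
    calc _ ≤ ‖(x, r)‖ ^ k * ‖iteratedFDeriv ℝ (m + 1) ψ (x, r)‖ := by
          rw [← norm_fderiv_iteratedFDeriv]
          gcongr
          · exact norm_fst_le (x, r)
          · exact ContinuousLinearMap.le_of_opNorm_le_of_le _ le_rfl hone |>.trans_eq (mul_one _)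
      _ ≤ _ := le_seminorm ℝ _ _ _ _
  have hmean := convex_univ.norm_image_sub_le_of_norm_hasDerivWithin_le
    (fun r _ => (hderiv r).hasDerivWithinAt) (fun r _ => hbound r)
    (Set.mem_univ s) (Set.mem_univ t)
  rw [← smul_sub, norm_smul, norm_pow, norm_norm, Real.norm_eq_abs] at hmean
  refine le_trans ?_ hmean
  rw [iteratedFDeriv_sub_apply, iteratedFDeriv_of_eq_slice hφ₁, iteratedFDeriv_of_eq_slice hφ₂]
  gcongr
  exact ContinuousMultilinearMap.norm_compContinuousLinearMap_inl_le
    (iteratedFDeriv ℝ m ψ (x, t) - iteratedFDeriv ℝ m ψ (x, s))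

theorem continuous_slice {ψ : 𝓢(E × ℝ, ℝ)} {slice : ℝ → 𝓢(E, ℝ)}
    (hslice : ∀ t x, slice t x = ψ (x, t)) : Continuous slice := by
  refine continuous_iff_continuousAt.2 fun s => ?_
  refine ((schwartz_withSeminorms ℝ E ℝ).tendsto_nhds slice (slice s)).2 fun ⟨k, m⟩ ε hε => ?_
  have hlim : Tendsto (fun t => SchwartzMap.seminorm ℝ k (m + 1) ψ * |t - s|) (𝓝 s) (𝓝 0) := by
    have hcont : Continuous fun t => SchwartzMap.seminorm ℝ k (m + 1) ψ * |t - s| := by fun_prop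
    simpa using hcont.tendsto s
  filter_upwards [hlim.eventually (gt_mem_nhds hε)] with t ht
  exact (seminorm_slice_sub_le (hslice t) (hslice s) k m).trans_lt ht

theorem continuous_apply_of_abs_le_pM {X : Type*} [TopologicalSpace X]
    {f : X → 𝓢(E, ℝ) →L[ℝ] ℝ} (hf : ∀ φ, Continuous fun t => f t φ)
    {C : ℝ} {M : ℕ} (hC : ∀ t φ, |f t φ| ≤ C * pM M φ) {φ : X → 𝓢(E, ℝ)} (hφ : Continuous φ) :
    Continuous fun t => f t (φ t) := by
  refine continuous_iff_continuousAt.2 fun s => ?_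
  have hp : Tendsto (fun t => pM M (φ t - φ s)) (𝓝 s) (𝓝 0) := by
    rw [Metric.tendsto_nhds]
    intro ε hε
    filter_upwards [((schwartz_withSeminorms ℝ E ℝ).tendsto_nhds' φ (φ s)).1 (hφ.tendsto s)
      (Finset.range (M + 1) ×ˢ Finset.range (M + 1)) ε hε] with t ht
    rw [dist_zero_right, Real.norm_of_nonneg (pM_nonneg _ _)]
    exact ht
  have hsmall : Tendsto (fun t => f t (φ t - φ s)) (𝓝 s) (𝓝 0) :=
    squeeze_zero_norm (fun t => hC t (φ t - φ s)) (by simpa using hp.const_mul C)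
  simpa [ContinuousAt] using hsmall.add ((hf (φ s)).tendsto s)

theorem norm_iteratedFDeriv_comp_le_of_norm_le_one {D : Type*} [NormedAddCommGroup D]
    [NormedSpace ℝ D] (φ : 𝓢(E, ℝ)) (L : D →L[ℝ] E) (hL : ‖L‖ ≤ 1) (m : ℕ) (z : D) :
    ‖iteratedFDeriv ℝ m (φ ∘ L) z‖ ≤ ‖iteratedFDeriv ℝ m φ (L z)‖ := by
  rw [L.iteratedFDeriv_comp_right (φ.smooth m) z le_rfl]
  refine (ContinuousMultilinearMap.norm_compContinuousLinearMap_le _ _).trans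
    (mul_le_of_le_one_right (norm_nonneg _) ?_)
  exact Finset.prod_le_one (fun _ _ => norm_nonneg _) fun _ _ => hL

/-- The tensor product `(x, y) ↦ φ x * χ y` of two real-valued Schwartz functions. -/
def tensor {D : Type*} [NormedAddCommGroup D] [NormedSpace ℝ D] (φ : 𝓢(E, ℝ)) (χ : 𝓢(D, ℝ)) :
    𝓢(E × D, ℝ) where
  toFun z := φ z.1 * χ z.2
  smooth' := ((φ.smooth ⊤).comp contDiff_fst).mul ((χ.smooth ⊤).comp contDiff_snd)
  decay' k m := by
    let p : ℕ → ℕ → ℝ := fun k i => SchwartzMap.seminorm ℝ k i φ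
    let q : ℕ → ℕ → ℝ := fun k i => SchwartzMap.seminorm ℝ k i χ
    refine ⟨∑ i ∈ Finset.range (m + 1),
      (m.choose i : ℝ) * (p k i * q 0 (m - i) + p 0 i * q k (m - i)), fun z => ?_⟩
    have hmul := norm_iteratedFDeriv_mul_le (((φ.smooth ⊤).comp contDiff_fst))
      ((χ.smooth ⊤).comp contDiff_snd) z (n := m) (mod_cast le_top)
    refine (mul_le_mul_of_nonneg_left hmul (by positivity)).trans ?_
    rw [Finset.mul_sum]
    refine Finset.sum_le_sum fun i _ => ?_
    have hφ := norm_iteratedFDeriv_comp_le_of_norm_le_one φ (.fst ℝ E D)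
      (ContinuousLinearMap.norm_fst_le ℝ E D) i z
    have hχ := norm_iteratedFDeriv_comp_le_of_norm_le_one χ (.snd ℝ E D)
      (ContinuousLinearMap.norm_snd_le ℝ E D) (m - i) z
    have hpow : ‖z‖ ^ k ≤ ‖z.1‖ ^ k + ‖z.2‖ ^ k := by
      rcases max_choice ‖z.1‖ ‖z.2‖ with h | h <;> rw [Prod.norm_def, h] <;> simp
    calc _ ≤ (‖z.1‖ ^ k + ‖z.2‖ ^ k) * ((m.choose i : ℝ) * ‖iteratedFDeriv ℝ i φ z.1‖
          * ‖iteratedFDeriv ℝ (m - i) χ z.2‖) := by gcongr <;> assumption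
      _ = (m.choose i : ℝ) *
          ((‖z.1‖ ^ k * ‖iteratedFDeriv ℝ i φ z.1‖) * ‖iteratedFDeriv ℝ (m - i) χ z.2‖
          + ‖iteratedFDeriv ℝ i φ z.1‖ * (‖z.2‖ ^ k * ‖iteratedFDeriv ℝ (m - i) χ z.2‖)) := by
        ring
      _ ≤ _ := by
        gcongr
        · exact le_seminorm ℝ k i φ z.1
        · exact norm_iteratedFDeriv_le_seminorm ℝ χ (m - i) z.2
        · exact norm_iteratedFDeriv_le_seminorm ℝ φ i z.1
        · exact le_seminorm ℝ k (m - i) χ z.2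

@[simp]
theorem tensor_apply {D : Type*} [NormedAddCommGroup D] [NormedSpace ℝ D] (φ : 𝓢(E, ℝ))
    (χ : 𝓢(D, ℝ)) (z : E × D) : tensor φ χ z = φ z.1 * χ z.2 := rfl

end WeightedSeminorm

end SchwartzMap

open SchwartzMap

/-- If `f : ℝ → 𝓢'(ℝⁿ)` is weak*-continuous and bounded, then for every
`ψ ∈ 𝓢(ℝⁿ×ℝ)` the function `t ↦ ⟨f(t), ψ(·,t)⟩` is continuous and integrable, the functional
`Λ_f : ψ ↦ ∫ ⟨f(t), ψ(·,t)⟩ dt` is a tempered distribution (it satisfies an estimate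
`|⟨Λ_f, ψ⟩| ≤ c·p_{M+2}(ψ)`), and `f ↦ Λ_f` is injective on such maps. -/
theorem continuous_bounded_distribution_family_integral (n : ℕ)
    (f g : ℝ → (SchwartzMap (Fin n → ℝ) ℝ →L[ℝ] ℝ))
    (hfc : ∀ φ : SchwartzMap (Fin n → ℝ) ℝ, Continuous fun t => f t φ)
    (hfb : ∀ φ : SchwartzMap (Fin n → ℝ) ℝ, ∃ C : ℝ, ∀ t : ℝ, |f t φ| ≤ C)
    (hgc : ∀ φ : SchwartzMap (Fin n → ℝ) ℝ, Continuous fun t => g t φ)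
    (hgb : ∀ φ : SchwartzMap (Fin n → ℝ) ℝ, ∃ C : ℝ, ∀ t : ℝ, |g t φ| ≤ C) :
    (∀ (ψ : SchwartzMap ((Fin n → ℝ) × ℝ) ℝ) (slice : ℝ → SchwartzMap (Fin n → ℝ) ℝ),
      (∀ (t : ℝ) (x : Fin n → ℝ), slice t x = ψ (x, t)) →
      Continuous (fun t => f t (slice t)) ∧ Integrable (fun t => f t (slice t))) ∧
    (∃ (c : ℝ) (M : ℕ), 0 ≤ c ∧
      ∀ (ψ : SchwartzMap ((Fin n → ℝ) × ℝ) ℝ) (slice : ℝ → SchwartzMap (Fin n → ℝ) ℝ),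
        (∀ (t : ℝ) (x : Fin n → ℝ), slice t x = ψ (x, t)) →
        |∫ t : ℝ, f t (slice t)| ≤ c * pM (M + 2) ψ) ∧
    ((∀ (ψ : SchwartzMap ((Fin n → ℝ) × ℝ) ℝ) (slice : ℝ → SchwartzMap (Fin n → ℝ) ℝ),
        (∀ (t : ℝ) (x : Fin n → ℝ), slice t x = ψ (x, t)) →
        (∫ t : ℝ, f t (slice t)) = ∫ t : ℝ, g t (slice t)) →
      f = g) := by
  obtain ⟨C, M, hC0, hC⟩ := exists_forall_abs_le_pM hfb
  have hbound (ψ : SchwartzMap ((Fin n → ℝ) × ℝ) ℝ) (slice : ℝ → SchwartzMap (Fin n → ℝ) ℝ)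
      (hslice : ∀ t x, slice t x = ψ (x, t)) (t : ℝ) :
      ‖f t (slice t)‖ ≤ C * (2 * pM (M + 2) ψ) * (1 + t ^ 2)⁻¹ := by
    rw [mul_assoc]
    exact (hC t _).trans (mul_le_mul_of_nonneg_left (pM_slice_le (hslice t) M) hC0)
  refine ⟨fun ψ slice hslice => ?_, ⟨2 * C * Real.pi, M, by positivity, fun ψ slice hslice => ?_⟩,
    fun heq => ?_⟩
  · have hcont := continuous_apply_of_abs_le_pM hfc hC (continuous_slice hslice)
    exact ⟨hcont, (integrable_inv_one_add_sq.const_mul _).mono' hcont.aestronglyMeasurable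
      (Eventually.of_forall (hbound ψ slice hslice))⟩
  · refine (norm_integral_le_of_norm_le (integrable_inv_one_add_sq.const_mul _)
      (Eventually.of_forall (hbound ψ slice hslice))).trans_eq ?_
    rw [integral_const_mul, integral_univ_inv_one_add_sq]
    ring
  · ext t φ
    have hcont : Continuous fun t => f t φ - g t φ := (hfc φ).sub (hgc φ)
    have hae : (fun t => f t φ - g t φ) =ᵐ[volume] fun _ => 0 := by
      refine ae_eq_zero_of_integral_contDiff_smul_eq_zero hcont.locallyIntegrable
        fun χ hχ hsupp => ?_
      have hint := heq (tensor φ (hsupp.toSchwartzMap hχ)) (fun t => χ t • φ)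
        fun t x => by simp [mul_comm]
      simp only [map_smul, smul_eq_mul] at hint
      simp only [smul_eq_mul, mul_sub]
      rw [integral_sub, hint, sub_self]
      · exact (hχ.continuous.mul (hfc φ)).integrable_of_hasCompactSupport hsupp.mul_right
      · exact (hχ.continuous.mul (hgc φ)).integrable_of_hasCompactSupport hsupp.mul_right
    exact sub_eq_zero.1 (congrFun ((hcont.ae_eq_iff_eq volume continuous_const).1 hae) t)

end
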